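/- arXiv:2105.07492 — 3 statements merged into one kernel-verified Lean document; each statement's English description precedes it below -/
import Mathlib

section
/- Let f be holomorphic and locally univalent on the unit disk 𝔻 = {z ∈ ℂ : |z| < 1}, and define for |z| > 1 the Ahlfors-Weill extension F(z) = E_f(1/conj(z)), where E_f(ζ) = f(ζ) + (1 − |ζ|²) f'(ζ) / (conj(ζ) − (1/2)(1 − |ζ|²) Pf(ζ)). Fix z with |z| > 1 and put ζ = 1/conj(z); assume conj(ζ) − (1/2)(1 − |ζ|²) Pf(ζ) ≠ 0. Then F is real-differentiable at z and ∂_z̄ F(z) = −(1/2) (ζ/conj(ζ))² (1 − |ζ|²)² Sf(ζ) · ∂_z F(z). -/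
/-!
Regard `E` as a function of the two formal variables `ζ` and `c = conj ζ`, with `ρ = 1 - ζ c`,
`P = f''/f'` and `D = c - ρ P / 2`, so that `E = f + ρ f' / D`. The quotient rule gives

* `∂E/∂c = -f' / D²`, because `-ζ D - ρ (1 + ζ P / 2) = -1`;
* `∂E/∂ζ = f' ρ² S / (2 D²)`, because `D (D - c + ρ P) - ρ (c P - ρ P') / 2 = ρ² S / 2`,
  where `S = P' - P² / 2`.

Substituting `ζ = 1 / conj z`, `c = 1 / z`, whose differentials are `-ζ² dz̄` and `-c² dz`,
exchanges the two Wirtinger derivatives: `∂_z F = c² f' / D²` and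
`∂_z̄ F = -ζ² f' ρ² S / (2 D²)`. Their ratio is the asserted coefficient.
These computations are carried by the predicate `HasWirtingerAt`, which obeys the usual rules of
differential calculus in each of its two coefficients.
-/

open Metric

/-- Wirtinger derivative `∂_z F = (1/2)(∂_x F - i ∂_y F)`. -/
noncomputable def wZ (F : ℂ → ℂ) (z : ℂ) : ℂ :=
  (fderiv ℝ F z 1 - Complex.I * fderiv ℝ F z Complex.I) / 2

/-- Wirtinger derivative `∂_z̄ F = (1/2)(∂_x F + i ∂_y F)`. -/
noncomputable def wZb (F : ℂ → ℂ) (z : ℂ) : ℂ :=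
  (fderiv ℝ F z 1 + Complex.I * fderiv ℝ F z Complex.I) / 2

/-- Pre-Schwarzian derivative `Ph = h''/h'` of a holomorphic function. -/
noncomputable def preSch (h : ℂ → ℂ) (z : ℂ) : ℂ :=
  deriv (deriv h) z / deriv h z

/-- Schwarzian derivative `Sh = (Ph)' - (1/2)(Ph)^2` of a holomorphic function. -/
noncomputable def schw (h : ℂ → ℂ) (z : ℂ) : ℂ :=
  deriv (preSch h) z - (1 / 2) * (preSch h z) ^ 2

/-- Dilatation `ω = g'/h'` of the harmonic mapping `f = h + conj g`. -/
noncomputable def dil (h g : ℂ → ℂ) (z : ℂ) : ℂ :=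
  deriv g z / deriv h z

/-- Harmonic pre-Schwarzian `P_f = Ph - conj(ω) ω' / (1 - |ω|²)`. -/
noncomputable def preSchH (h g : ℂ → ℂ) (z : ℂ) : ℂ :=
  preSch h z -
    (starRingEnd ℂ) (dil h g z) * deriv (dil h g) z / ((1 - ‖dil h g z‖ ^ 2 : ℝ) : ℂ)

/-- Harmonic Schwarzian `S_f = ∂_z P_f - (1/2) P_f²`. -/
noncomputable def schwH (h g : ℂ → ℂ) (z : ℂ) : ℂ :=
  wZ (preSchH h g) z - (1 / 2) * (preSchH h g z) ^ 2

/-- Denominator `conj ζ - (1/2)(1-|ζ|²) Ph(ζ)` (case A). -/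
noncomputable def denA (h : ℂ → ℂ) (ζ : ℂ) : ℂ :=
  (starRingEnd ℂ) ζ - (1 / 2) * ((1 - ‖ζ‖ ^ 2 : ℝ) : ℂ) * preSch h ζ

/-- Denominator `conj ζ - (1/2)(1-|ζ|²) P_f(ζ)` (case B). -/
noncomputable def denB (h g : ℂ → ℂ) (ζ : ℂ) : ℂ :=
  (starRingEnd ℂ) ζ - (1 / 2) * ((1 - ‖ζ‖ ^ 2 : ℝ) : ℂ) * preSchH h g ζ

/-- `Φ` for case A: `(1-|ζ|²) h'(ζ) / (conj ζ - (1/2)(1-|ζ|²) Ph(ζ))`. -/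
noncomputable def phiA (h : ℂ → ℂ) (ζ : ℂ) : ℂ :=
  ((1 - ‖ζ‖ ^ 2 : ℝ) : ℂ) * deriv h ζ / denA h ζ

/-- `Φ` for case B: `(1-|ζ|²) h'(ζ) / (conj ζ - (1/2)(1-|ζ|²) P_f(ζ))`. -/
noncomputable def phiB (h g : ℂ → ℂ) (ζ : ℂ) : ℂ :=
  ((1 - ‖ζ‖ ^ 2 : ℝ) : ℂ) * deriv h ζ / denB h g ζ

/-- Case A extension value `E_f(ζ) = f(ζ) + Φ(ζ) + conj(ω(ζ)) conj(Φ(ζ))`, `τ = Ph`. -/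
noncomputable def extA (h g : ℂ → ℂ) (ζ : ℂ) : ℂ :=
  (h ζ + (starRingEnd ℂ) (g ζ)) + phiA h ζ +
    (starRingEnd ℂ) (dil h g ζ) * (starRingEnd ℂ) (phiA h ζ)

/-- Case B extension value `E_f(ζ) = f(ζ) + Φ(ζ) + conj(ω(ζ)) conj(Φ(ζ))`, `τ = P_f`. -/
noncomputable def extB (h g : ℂ → ℂ) (ζ : ℂ) : ℂ :=
  (h ζ + (starRingEnd ℂ) (g ζ)) + phiB h g ζ +
    (starRingEnd ℂ) (dil h g ζ) * (starRingEnd ℂ) (phiB h g ζ)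

/-- `u` is real-differentiable at `z` with differential `a dz + b dz̄`, so that `a` and `b` are
its two Wirtinger derivatives there. -/
def HasWirtingerAt (u : ℂ → ℂ) (a b z : ℂ) : Prop :=
  HasFDerivAt u
    (a • (ContinuousLinearMap.id ℝ ℂ) + b • (Complex.conjCLE : ℂ →L[ℝ] ℂ)) z

namespace HasWirtingerAt

variable {u v : ℂ → ℂ} {a b a' b' z : ℂ}

theorem wZ_eq (h : HasWirtingerAt u a b z) : wZ u z = a := by
  have h' : HasFDerivAt u _ z := h
  rw [wZ, h'.fderiv]
  simp
  linear_combination (-(a / 2) + b / 2) * Complex.I_mul_I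

theorem wZb_eq (h : HasWirtingerAt u a b z) : wZb u z = b := by
  have h' : HasFDerivAt u _ z := h
  rw [wZb, h'.fderiv]
  simp
  linear_combination (a / 2 - b / 2) * Complex.I_mul_I

theorem congr_coeff (h : HasWirtingerAt u a b z) (ha : a = a') (hb : b = b') :
    HasWirtingerAt u a' b' z := ha ▸ hb ▸ h

theorem const (k : ℂ) : HasWirtingerAt (fun _ => k) 0 0 z := by
  unfold HasWirtingerAt
  refine (hasFDerivAt_const k z).congr_fderiv ?_
  ext <;> simp

theorem conj : HasWirtingerAt (fun w => (starRingEnd ℂ) w) 0 1 z := by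
  unfold HasWirtingerAt
  refine (Complex.conjCLE : ℂ →L[ℝ] ℂ).hasFDerivAt.congr_fderiv ?_
  ext <;> simp

theorem of_hasDerivAt {d : ℂ} (h : HasDerivAt u d z) : HasWirtingerAt u d 0 z := by
  unfold HasWirtingerAt
  refine (h.hasFDerivAt.restrictScalars ℝ).congr_fderiv ?_
  ext <;> simp [mul_comm]

theorem add (hu : HasWirtingerAt u a b z) (hv : HasWirtingerAt v a' b' z) :
    HasWirtingerAt (fun w => u w + v w) (a + a') (b + b') z := by
  unfold HasWirtingerAt at *
  refine (hu.add hv).congr_fderiv ?_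
  ext <;> simp <;> ring

theorem sub (hu : HasWirtingerAt u a b z) (hv : HasWirtingerAt v a' b' z) :
    HasWirtingerAt (fun w => u w - v w) (a - a') (b - b') z := by
  unfold HasWirtingerAt at *
  refine (hu.sub hv).congr_fderiv ?_
  ext <;> simp <;> ring

theorem mul (hu : HasWirtingerAt u a b z) (hv : HasWirtingerAt v a' b' z) :
    HasWirtingerAt (fun w => u w * v w) (a * v z + u z * a') (b * v z + u z * b') z := by
  unfold HasWirtingerAt at *
  refine (hu.mul hv).congr_fderiv ?_
  ext <;> simp <;> ring

/-- Chain rule with a holomorphic outer function. -/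
theorem comp {g : ℂ → ℂ} {d : ℂ} (hg : HasDerivAt g d (u z)) (hu : HasWirtingerAt u a b z) :
    HasWirtingerAt (fun w => g (u w)) (d * a) (d * b) z := by
  unfold HasWirtingerAt at *
  refine ((hg.hasFDerivAt.restrictScalars ℝ).comp z hu).congr_fderiv ?_
  ext <;> simp <;> ring

theorem inv (hu : HasWirtingerAt u a b z) (h0 : u z ≠ 0) :
    HasWirtingerAt (fun w => (u w)⁻¹) (-(u z ^ 2)⁻¹ * a) (-(u z ^ 2)⁻¹ * b) z :=
  comp (hasDerivAt_inv h0) hu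

end HasWirtingerAt

/-- The Beltrami coefficient of the Ahlfors–Weill extension of a holomorphic, locally
univalent `f` on the unit disk. -/
theorem ahlfors_weill_beltrami
    (f : ℂ → ℂ) (hf : DifferentiableOn ℂ f (ball 0 1))
    (hf' : ∀ w ∈ ball (0 : ℂ) 1, deriv f w ≠ 0)
    (E F : ℂ → ℂ)
    (hE : E = fun w => f w + ((1 - ‖w‖ ^ 2 : ℝ) : ℂ) * deriv f w / denA f w)
    (hF : F = fun w => E (1 / (starRingEnd ℂ) w))
    (z ζ : ℂ) (hz : 1 < ‖z‖) (hζ : ζ = 1 / (starRingEnd ℂ) z)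
    (hden : denA f ζ ≠ 0) :
    DifferentiableAt ℝ F z ∧
      wZb F z = -(1 / 2) * (ζ / (starRingEnd ℂ) ζ) ^ 2 * ((1 - ‖ζ‖ ^ 2 : ℝ) : ℂ) ^ 2 *
        schw f ζ * wZ F z := by
  have hz0 : z ≠ 0 := by
    rintro rfl
    simp at hz
    linarith
  have hcz0 : (starRingEnd ℂ) z ≠ 0 := by simpa using hz0
  have hζ' : ζ = ((starRingEnd ℂ) z)⁻¹ := by rw [hζ, one_div]
  have hcζ : (starRingEnd ℂ) ζ = z⁻¹ := by simp [hζ']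
  have hζb : ζ ∈ ball (0 : ℂ) 1 := by
    rw [mem_ball_zero_iff, hζ', norm_inv, RCLike.norm_conj]
    exact inv_lt_one_of_one_lt₀ hz
  have hnorm : ∀ w : ℂ, ((1 - ‖w‖ ^ 2 : ℝ) : ℂ) = 1 - w * (starRingEnd ℂ) w := by
    intro w
    rw [Complex.mul_conj, Complex.normSq_eq_norm_sq]
    push_cast
    ring
  have hnhds : ball (0 : ℂ) 1 ∈ nhds ζ := isOpen_ball.mem_nhds hζb
  have hd1 := hf.deriv isOpen_ball
  have hd2 := hd1.deriv isOpen_ball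
  have hP : DifferentiableAt ℂ (preSch f) ζ :=
    (hd2.differentiableAt hnhds).div (hd1.differentiableAt hnhds) (hf' ζ hζb)
  have hf1 : deriv f ζ ≠ 0 := hf' ζ hζb
  -- `F` in terms of `s w = 1 / conj w` and its conjugate `t w = 1 / w`
  have hF' : F = fun w => f ((starRingEnd ℂ) w)⁻¹ +
      (1 - ((starRingEnd ℂ) w)⁻¹ * w⁻¹) * deriv f ((starRingEnd ℂ) w)⁻¹ *
        (w⁻¹ - (1 / 2) * (1 - ((starRingEnd ℂ) w)⁻¹ * w⁻¹) *
          preSch f ((starRingEnd ℂ) w)⁻¹)⁻¹ := by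
    rw [hF, hE]
    funext w
    simp only [denA, hnorm, div_eq_mul_inv, one_mul, map_inv₀, Complex.conj_conj]
  have hs : HasWirtingerAt (fun w => ((starRingEnd ℂ) w)⁻¹) 0 (-ζ ^ 2) z :=
    (HasWirtingerAt.conj.inv hcz0).congr_coeff (by simp) (by simp [hζ'])
  have ht : HasWirtingerAt (fun w => w⁻¹) (-((starRingEnd ℂ) ζ) ^ 2) 0 z :=
    (HasWirtingerAt.of_hasDerivAt (hasDerivAt_inv hz0)).congr_coeff (by simp [hcζ]) rfl
  have hsf := HasWirtingerAt.comp (u := fun w => ((starRingEnd ℂ) w)⁻¹)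
    (hζ' ▸ (hf.differentiableAt hnhds).hasDerivAt : HasDerivAt f _ ((starRingEnd ℂ) z)⁻¹) hs
  have hsf1 := HasWirtingerAt.comp (u := fun w => ((starRingEnd ℂ) w)⁻¹)
    (hζ' ▸ (hd1.differentiableAt hnhds).hasDerivAt :
    HasDerivAt (deriv f) _ ((starRingEnd ℂ) z)⁻¹) hs
  have hsP := HasWirtingerAt.comp (u := fun w => ((starRingEnd ℂ) w)⁻¹)
    (hζ' ▸ hP.hasDerivAt : HasDerivAt (preSch f) _ ((starRingEnd ℂ) z)⁻¹) hs
  have hρ := (HasWirtingerAt.const 1).sub (hs.mul ht)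
  have hD := ht.sub (((HasWirtingerAt.const (1 / 2)).mul hρ).mul hsP)
  have hden' := hden
  rw [denA, hnorm, hcζ] at hden'
  have key := hsf.add ((hρ.mul hsf1).mul (hD.inv (by simpa only [← hζ'] using hden')))
  rw [← hF'] at key
  have hdiff : DifferentiableAt ℝ F z := HasFDerivAt.differentiableAt key
  refine ⟨hdiff, ?_⟩
  have hf2 : deriv (deriv f) ζ = preSch f ζ * deriv f ζ := by
    rw [preSch, div_mul_cancel₀ _ hf1]
  have hc0 : z⁻¹ ≠ 0 := inv_ne_zero hz0
  rw [key.wZb_eq, key.wZ_eq, schw, hnorm, hcζ]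
  simp only [← hζ', hf2]
  generalize z⁻¹ = c at *
  generalize preSch f ζ = P at *
  generalize deriv (preSch f) ζ = P' at *
  generalize deriv f ζ = f₁ at *
  clear key
  generalize hDD : c - 1 / 2 * (1 - ζ * c) * P = D at *
  field_simp
  subst hDD
  ring
end

section
/- Let f = h + conj(g) be a sense-preserving harmonic mapping on 𝔻 with dilatation ω = g'/h' and h' nonvanishing, let α ∈ 𝔻 and let φ_α(z) = (z − α)/(1 − conj(α) z) be the corresponding disk automorphism. Write f ∘ φ_α = (h ∘ φ_α) + conj(g ∘ φ_α). Then for either choice of extension (case A, τ = Ph, or case B, τ = P_f) and for every ζ ∈ 𝔻 at which both sides are defined (nonvanishing denominators), E_{f ∘ φ_α}(ζ) = E_f(φ_α(ζ)). -/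
/-!
The extension formula is invariant because its correction term `Φ` is. Let `φ` be the disk
automorphism. Under precomposition the dilatation pulls back, `ω_{f ∘ φ} = ω ∘ φ`, and both
`τ = Ph` and `τ = P_f` obey the chain rule `τ_{f ∘ φ} = (τ ∘ φ) φ' + φ''/φ'`: the extra term
`conj ω · ω' / (1 - |ω|²)` of `P_f` simply picks up a factor `φ'`.

With `c = (1 - α conj ζ) / (1 - conj α ζ)`, which is nonzero, direct computation gives
`(1 - |ζ|²) φ'(ζ) = c (1 - |φ(ζ)|²)` and
`conj ζ - (1/2)(1 - |ζ|²) φ''(ζ)/φ'(ζ) = c conj (φ ζ)`. Hence numerator and denominator of `Φ`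
are both multiplied by `c`, and `Φ_{f ∘ φ}(ζ) = Φ_f(φ ζ)`. Since `c ≠ 0`, this holds even when
the denominators vanish, with the convention `x / 0 = 0`.
-/

open Metric

open scoped ComplexConjugate

/-- The disk automorphism `φ_α(z) = (z - α) / (1 - conj α z)`. -/
noncomputable def diskAut (α z : ℂ) : ℂ := (z - α) / (1 - conj α * z)

lemma one_sub_conj_mul_ne_zero {α z : ℂ} (hα : α ∈ ball (0 : ℂ) 1) (hz : z ∈ ball (0 : ℂ) 1) :
    1 - conj α * z ≠ 0 := by
  rw [mem_ball_zero_iff] at hα hz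
  intro h0
  have h1 : ‖conj α * z‖ = 1 := by rw [← sub_eq_zero.mp h0, norm_one]
  rw [norm_mul, RCLike.norm_conj] at h1
  nlinarith [norm_nonneg α, norm_nonneg z]

lemma ofReal_one_sub_norm_sq (z : ℂ) : ((1 - ‖z‖ ^ 2 : ℝ) : ℂ) = 1 - z * conj z := by
  rw [Complex.mul_conj, Complex.normSq_eq_norm_sq]
  push_cast
  rfl

lemma one_sub_mul_conj_ne_zero {α z : ℂ} (hα : α ∈ ball (0 : ℂ) 1) (hz : z ∈ ball (0 : ℂ) 1) :
    1 - α * conj z ≠ 0 := by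
  have h := (map_ne_zero (starRingEnd ℂ)).mpr (one_sub_conj_mul_ne_zero hα hz)
  simpa using h

lemma conj_diskAut (α z : ℂ) : conj (diskAut α z) = (conj z - conj α) / (1 - α * conj z) := by
  simp [diskAut]

lemma one_sub_norm_sq_diskAut {α z : ℂ} (hα : α ∈ ball (0 : ℂ) 1) (hz : z ∈ ball (0 : ℂ) 1) :
    ((1 - ‖diskAut α z‖ ^ 2 : ℝ) : ℂ) =
      ((1 - ‖z‖ ^ 2 : ℝ) : ℂ) * (1 - α * conj α) /
        ((1 - conj α * z) * (1 - α * conj z)) := by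
  have h1 := one_sub_conj_mul_ne_zero hα hz
  have h2 := one_sub_mul_conj_ne_zero hα hz
  have h1' : 1 - z * conj α ≠ 0 := by rwa [mul_comm]
  rw [ofReal_one_sub_norm_sq, ofReal_one_sub_norm_sq, conj_diskAut, diskAut]
  field_simp
  ring

lemma diskAut_mem_ball {α z : ℂ} (hα : α ∈ ball (0 : ℂ) 1) (hz : z ∈ ball (0 : ℂ) 1) :
    diskAut α z ∈ ball (0 : ℂ) 1 := by
  have h1 := one_sub_conj_mul_ne_zero hα hz
  have key : (1 - ‖diskAut α z‖ ^ 2) * Complex.normSq (1 - conj α * z) =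
      (1 - ‖z‖ ^ 2) * (1 - ‖α‖ ^ 2) := by
    have h2 := one_sub_mul_conj_ne_zero hα hz
    apply Complex.ofReal_injective
    rw [Complex.ofReal_mul, Complex.ofReal_mul, one_sub_norm_sq_diskAut hα hz,
      ← Complex.mul_conj, ofReal_one_sub_norm_sq α]
    simp only [map_sub, map_one, map_mul, Complex.conj_conj]
    field_simp
  have hp : 0 < Complex.normSq (1 - conj α * z) := Complex.normSq_pos.mpr h1
  rw [mem_ball_zero_iff] at *
  have ha : 0 < 1 - ‖α‖ ^ 2 := by nlinarith [norm_nonneg α]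
  have hb : 0 < 1 - ‖z‖ ^ 2 := by nlinarith [norm_nonneg z]
  have hc : 0 < 1 - ‖diskAut α z‖ ^ 2 :=
    pos_of_mul_pos_left (key ▸ mul_pos hb ha) hp.le
  nlinarith [norm_nonneg (diskAut α z)]

lemma hasDerivAt_diskAut {α z : ℂ} (hα : α ∈ ball (0 : ℂ) 1) (hz : z ∈ ball (0 : ℂ) 1) :
    HasDerivAt (diskAut α) ((1 - α * conj α) / (1 - conj α * z) ^ 2) z := by
  have h1 := one_sub_conj_mul_ne_zero hα hz
  have hn : HasDerivAt (fun z : ℂ => z - α) 1 z := (hasDerivAt_id z).sub_const α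
  have hd : HasDerivAt (fun z : ℂ => 1 - conj α * z) (-(conj α * 1)) z :=
    ((hasDerivAt_id z).const_mul (conj α)).const_sub 1
  refine (hn.div hd h1).congr_deriv ?_
  ring

lemma hasDerivAt_deriv_diskAut {α z : ℂ} (hα : α ∈ ball (0 : ℂ) 1) (hz : z ∈ ball (0 : ℂ) 1) :
    HasDerivAt (fun z => (1 - α * conj α) / (1 - conj α * z) ^ 2)
      (2 * conj α / (1 - conj α * z) * ((1 - α * conj α) / (1 - conj α * z) ^ 2)) z := by
  have h1 := one_sub_conj_mul_ne_zero hα hz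
  have hd : HasDerivAt (fun z : ℂ => 1 - conj α * z) (-(conj α * 1)) z :=
    ((hasDerivAt_id z).const_mul (conj α)).const_sub 1
  have h1' : 1 - z * conj α ≠ 0 := by rwa [mul_comm]
  refine ((hasDerivAt_const z (1 - α * conj α)).div (hd.fun_pow 2)
    (pow_ne_zero 2 h1)).congr_deriv ?_
  push_cast
  field_simp
  ring

lemma one_sub_mul_conj_self_ne_zero {α : ℂ} (hα : α ∈ ball (0 : ℂ) 1) :
    1 - α * conj α ≠ 0 := one_sub_mul_conj_ne_zero hα hα

section Pullback

variable {h g : ℂ → ℂ} {α ζ : ℂ}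

lemma deriv_comp_diskAut (hh : DifferentiableOn ℂ h (ball 0 1)) (hα : α ∈ ball (0 : ℂ) 1)
    (hζ : ζ ∈ ball (0 : ℂ) 1) :
    deriv (h ∘ diskAut α) ζ =
      deriv h (diskAut α ζ) * ((1 - α * conj α) / (1 - conj α * ζ) ^ 2) :=
  ((hh.differentiableAt (isOpen_ball.mem_nhds (diskAut_mem_ball hα hζ))).hasDerivAt.comp ζ
    (hasDerivAt_diskAut hα hζ)).deriv

/-- Chain rule for the pre-Schwarzian; `2 conj α / (1 - conj α ζ)` is the pre-Schwarzian of the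
automorphism itself. -/
lemma preSch_comp_diskAut (hh : DifferentiableOn ℂ h (ball 0 1))
    (hh' : ∀ w ∈ ball (0 : ℂ) 1, deriv h w ≠ 0) (hα : α ∈ ball (0 : ℂ) 1)
    (hζ : ζ ∈ ball (0 : ℂ) 1) :
    preSch (h ∘ diskAut α) ζ =
      preSch h (diskAut α ζ) * ((1 - α * conj α) / (1 - conj α * ζ) ^ 2) +
        2 * conj α / (1 - conj α * ζ) := by
  have hw := diskAut_mem_ball hα hζ
  have h1 := one_sub_conj_mul_ne_zero hα hζ
  have h2 := one_sub_mul_conj_self_ne_zero hα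
  have h3 := hh' _ hw
  have hev : deriv (h ∘ diskAut α) =ᶠ[nhds ζ]
      fun z => deriv h (diskAut α z) * ((1 - α * conj α) / (1 - conj α * z) ^ 2) := by
    filter_upwards [isOpen_ball.mem_nhds hζ] with z hz
    exact deriv_comp_diskAut hh hα hz
  have hd : HasDerivAt (fun z => deriv h (diskAut α z)) _ ζ :=
    ((hh.deriv isOpen_ball).differentiableAt
      (isOpen_ball.mem_nhds hw)).hasDerivAt.comp ζ (hasDerivAt_diskAut hα hζ)
  have hdd := (hd.mul (hasDerivAt_deriv_diskAut hα hζ)).deriv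
  rw [preSch, hev.deriv_eq, deriv_comp_diskAut hh hα hζ, preSch]
  refine (congrArg (· / _) hdd).trans ?_
  field_simp

lemma dil_comp_diskAut (hh : DifferentiableOn ℂ h (ball 0 1))
    (hg : DifferentiableOn ℂ g (ball 0 1)) (hα : α ∈ ball (0 : ℂ) 1)
    (hζ : ζ ∈ ball (0 : ℂ) 1) :
    dil (h ∘ diskAut α) (g ∘ diskAut α) ζ = dil h g (diskAut α ζ) := by
  rw [dil, deriv_comp_diskAut hh hα hζ, deriv_comp_diskAut hg hα hζ, dil]
  exact mul_div_mul_right _ _ (div_ne_zero (one_sub_mul_conj_self_ne_zero hα)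
    (pow_ne_zero 2 (one_sub_conj_mul_ne_zero hα hζ)))

lemma deriv_dil_comp_diskAut (hh : DifferentiableOn ℂ h (ball 0 1))
    (hg : DifferentiableOn ℂ g (ball 0 1))
    (hh' : ∀ w ∈ ball (0 : ℂ) 1, deriv h w ≠ 0) (hα : α ∈ ball (0 : ℂ) 1)
    (hζ : ζ ∈ ball (0 : ℂ) 1) :
    deriv (dil (h ∘ diskAut α) (g ∘ diskAut α)) ζ =
      deriv (dil h g) (diskAut α ζ) * ((1 - α * conj α) / (1 - conj α * ζ) ^ 2) := by
  have hev : dil (h ∘ diskAut α) (g ∘ diskAut α) =ᶠ[nhds ζ] dil h g ∘ diskAut α := by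
    filter_upwards [isOpen_ball.mem_nhds hζ] with z hz
    exact dil_comp_diskAut hh hg hα hz
  rw [hev.deriv_eq]
  exact deriv_comp_diskAut ((hg.deriv isOpen_ball).div (hh.deriv isOpen_ball) hh') hα hζ

/-- The harmonic pre-Schwarzian obeys the same chain rule as the holomorphic one. -/
lemma preSchH_comp_diskAut (hh : DifferentiableOn ℂ h (ball 0 1))
    (hg : DifferentiableOn ℂ g (ball 0 1))
    (hh' : ∀ w ∈ ball (0 : ℂ) 1, deriv h w ≠ 0) (hα : α ∈ ball (0 : ℂ) 1)
    (hζ : ζ ∈ ball (0 : ℂ) 1) :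
    preSchH (h ∘ diskAut α) (g ∘ diskAut α) ζ =
      preSchH h g (diskAut α ζ) * ((1 - α * conj α) / (1 - conj α * ζ) ^ 2) +
        2 * conj α / (1 - conj α * ζ) := by
  rw [preSchH, preSch_comp_diskAut hh hh' hα hζ, dil_comp_diskAut hh hg hα hζ,
    deriv_dil_comp_diskAut hh hg hh' hα hζ, preSchH]
  ring

/-- Invariance of `Φ`: if `t` transforms into `s` by the pre-Schwarzian chain rule and `d` stands
for `h'(φ ζ)`, then numerator and denominator both acquire the factor
`(1 - α conj ζ) / (1 - conj α ζ)`. -/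
lemma phi_invariance (hα : α ∈ ball (0 : ℂ) 1) (hζ : ζ ∈ ball (0 : ℂ) 1) {s t d : ℂ}
    (hs : s = t * ((1 - α * conj α) / (1 - conj α * ζ) ^ 2) + 2 * conj α / (1 - conj α * ζ)) :
    ((1 - ‖ζ‖ ^ 2 : ℝ) : ℂ) * (d * ((1 - α * conj α) / (1 - conj α * ζ) ^ 2)) /
        (conj ζ - (1 / 2) * ((1 - ‖ζ‖ ^ 2 : ℝ) : ℂ) * s) =
      ((1 - ‖diskAut α ζ‖ ^ 2 : ℝ) : ℂ) * d /
        (conj (diskAut α ζ) - (1 / 2) * ((1 - ‖diskAut α ζ‖ ^ 2 : ℝ) : ℂ) * t) := by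
  have h1 := one_sub_conj_mul_ne_zero hα hζ
  have h2 := one_sub_mul_conj_ne_zero hα hζ
  have h1' : 1 - ζ * conj α ≠ 0 := by rwa [mul_comm]
  have h2' : 1 - conj ζ * α ≠ 0 := by rwa [mul_comm]
  have hc : (1 - α * conj ζ) / (1 - conj α * ζ) ≠ 0 := div_ne_zero h2 h1
  have hnum : ((1 - ‖ζ‖ ^ 2 : ℝ) : ℂ) * (d * ((1 - α * conj α) / (1 - conj α * ζ) ^ 2)) =
      (1 - α * conj ζ) / (1 - conj α * ζ) * (((1 - ‖diskAut α ζ‖ ^ 2 : ℝ) : ℂ) * d) := by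
    rw [one_sub_norm_sq_diskAut hα hζ]
    field_simp
  have hden : conj ζ - (1 / 2) * ((1 - ‖ζ‖ ^ 2 : ℝ) : ℂ) * s =
      (1 - α * conj ζ) / (1 - conj α * ζ) *
        (conj (diskAut α ζ) - (1 / 2) * ((1 - ‖diskAut α ζ‖ ^ 2 : ℝ) : ℂ) * t) := by
    rw [one_sub_norm_sq_diskAut hα hζ, conj_diskAut, hs, ofReal_one_sub_norm_sq]
    field_simp
    ring
  rw [hnum, hden, mul_div_mul_left _ _ hc]

end Pullback

/-- Invariance of both extensions under precomposition with a disk automorphism: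
`E_{f ∘ φ_α} = E_f ∘ φ_α`. -/
theorem ext_precomposition_invariance
    (h g : ℂ → ℂ)
    (hh : DifferentiableOn ℂ h (ball 0 1)) (hg : DifferentiableOn ℂ g (ball 0 1))
    (hsp : ∀ w ∈ ball (0 : ℂ) 1, ‖dil h g w‖ < 1)
    (hh' : ∀ w ∈ ball (0 : ℂ) 1, deriv h w ≠ 0)
    (α : ℂ) (hα : α ∈ ball (0 : ℂ) 1)
    (φ : ℂ → ℂ) (hφ : φ = fun z => (z - α) / (1 - (starRingEnd ℂ) α * z))
    (ζ : ℂ) (hζ : ζ ∈ ball (0 : ℂ) 1) :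
    (denA (h ∘ φ) ζ ≠ 0 → denA h (φ ζ) ≠ 0 →
        extA (h ∘ φ) (g ∘ φ) ζ = extA h g (φ ζ)) ∧
      (denB (h ∘ φ) (g ∘ φ) ζ ≠ 0 → denB h g (φ ζ) ≠ 0 →
        extB (h ∘ φ) (g ∘ φ) ζ = extB h g (φ ζ)) := by
  obtain rfl : φ = diskAut α := hφ
  have hA : phiA (h ∘ diskAut α) ζ = phiA h (diskAut α ζ) := by
    rw [phiA, denA, deriv_comp_diskAut hh hα hζ]
    exact phi_invariance hα hζ (preSch_comp_diskAut hh hh' hα hζ)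
  have hB : phiB (h ∘ diskAut α) (g ∘ diskAut α) ζ = phiB h g (diskAut α ζ) := by
    rw [phiB, denB, deriv_comp_diskAut hh hα hζ]
    exact phi_invariance hα hζ (preSchH_comp_diskAut hh hg hh' hα hζ)
  have hω := dil_comp_diskAut hh hg hα hζ
  constructor
  · intro _ _
    rw [extA, extA, hA, hω]
    rfl
  · intro _ _
    rw [extB, extB, hB, hω]
    rfl
end

section
/- Let f = h + conj(g) be a sense-preserving harmonic mapping on 𝔻 with dilatation ω = g'/h', |ω| < 1, h' nonvanishing, and define for |z| > 1 the map F(z) = E_f(1/conj(z)) using the case-(A) extension. Fix z with |z| > 1, put ζ = 1/conj(z), assume D(ζ) = conj(ζ) − (1/2)(1 − |ζ|²) Ph(ζ) ≠ 0, and set λ = conj(h'(ζ)) D(ζ)² / (h'(ζ) conj(D(ζ))²) and β = (1/2)(1 − |ζ|²)² Sh(ζ). Then the Wirtinger derivatives of F at z satisfy ∂_z̄ F(z) · (1 − λ conj(ω(ζ)) conj(β) − λ conj(ω'(ζ)) (1 − |ζ|²) conj(D(ζ))) = (z/conj(z))² · ∂_z F(z) · (λ conj(ω(ζ)) − β). 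-/
/-!
Write `D = denA h`, `r = 1 - |ζ|²`, `Φ = phiA h`. Leibniz' rule in the variables `ζ`, `conj ζ` gives
`h' + ∂Φ = h' β / D²` and `∂̄Φ = -h' / D²`: the Schwarzian appears because `(∂r) D` and `r ∂D`
complete to the square `D²`. Hence the extension `E = h + conj g + Φ + conj ω conj Φ` satisfies
`∂E = (h' / D²) (β - λ conj ω)` and
`∂̄E = -(h' / D²) (1 - λ conj ω conj β - λ conj ω' r conj D)`.
Composing with the anti-holomorphic reflection `z ↦ 1 / conj z`, whose `∂̄`-derivative is
`-1 / (conj z)²`, exchanges the two derivatives, and the identity is the equality of two ways of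
writing `∂E ∂̄E D² / (h' (conj z)²)`.

Real differentiability is handled by the predicate `HasW f a b z`, a Wirtinger form of
`HasFDerivAt`, for which sum, product, quotient, conjugation and chain rules are proved.
-/

open Metric

/-- The real-linear map `v ↦ a v + b (conj v)`. -/
noncomputable def wirtMap (a b : ℂ) : ℂ →L[ℝ] ℂ :=
  a • (ContinuousLinearMap.id ℝ ℂ) + b • (Complex.conjCLE : ℂ →L[ℝ] ℂ)

lemma wirtMap_apply (a b v : ℂ) : wirtMap a b v = a * v + b * (starRingEnd ℂ) v := by
  simp [wirtMap]

/-- `f` is real differentiable at `z` with `∂f = a` and `∂̄f = b`. -/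
def HasW (f : ℂ → ℂ) (a b z : ℂ) : Prop := HasFDerivAt f (wirtMap a b) z

namespace HasW

variable {f k : ℂ → ℂ} {a b c d z : ℂ}

lemma congr_coeff (hf : HasW f a b z) (h1 : a = c) (h2 : b = d) : HasW f c d z := by
  subst h1 h2; exact hf

lemma wZ_eq (hf : HasW f a b z) : wZ f z = a := by
  have h : fderiv ℝ f z = wirtMap a b := HasFDerivAt.fderiv hf
  rw [wZ, h, wirtMap_apply, wirtMap_apply]
  simp only [map_one, Complex.conj_I]
  linear_combination (-(a - b) / 2) * Complex.I_mul_I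

lemma wZb_eq (hf : HasW f a b z) : wZb f z = b := by
  have h : fderiv ℝ f z = wirtMap a b := HasFDerivAt.fderiv hf
  rw [wZb, h, wirtMap_apply, wirtMap_apply]
  simp only [map_one, Complex.conj_I]
  linear_combination ((a - b) / 2) * Complex.I_mul_I

lemma of_hasDerivAt (hf : HasDerivAt f a z) : HasW f a 0 z := by
  have h := hf.hasFDerivAt.restrictScalars ℝ
  refine HasFDerivAt.congr_fderiv h ?_
  ext v; simp [wirtMap_apply, mul_comm]

lemma add (hf : HasW f a b z) (hk : HasW k c d z) :
    HasW (fun w => f w + k w) (a + c) (b + d) z := by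
  refine (HasFDerivAt.add hf hk).congr_fderiv ?_
  ext v; simp only [wirtMap_apply, add_apply]; ring

lemma conj (hf : HasW f a b z) :
    HasW (fun w => (starRingEnd ℂ) (f w)) ((starRingEnd ℂ) b) ((starRingEnd ℂ) a) z := by
  refine ((Complex.conjCLE : ℂ →L[ℝ] ℂ).hasFDerivAt.comp z hf).congr_fderiv ?_
  ext v; simp [wirtMap_apply]; ring

lemma mul (hf : HasW f a b z) (hk : HasW k c d z) :
    HasW (fun w => f w * k w) (a * k z + f z * c) (b * k z + f z * d) z := by
  refine (HasFDerivAt.mul hf hk).congr_fderiv ?_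
  ext v
  simp only [wirtMap_apply, add_apply, smul_apply, smul_eq_mul]; ring

lemma comp (hf : HasW f a b (k z)) (hk : HasW k c d z) :
    HasW (fun w => f (k w)) (a * c + b * (starRingEnd ℂ) d) (a * d + b * (starRingEnd ℂ) c) z := by
  refine (HasFDerivAt.comp z hf hk).congr_fderiv ?_
  ext v
  simp only [wirtMap_apply, ContinuousLinearMap.comp_apply, map_add, map_mul, Complex.conj_conj]
  ring

lemma inv (hf : HasW f a b z) (h0 : f z ≠ 0) :
    HasW (fun w => (f w)⁻¹) (-a / f z ^ 2) (-b / f z ^ 2) z :=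
  (comp (of_hasDerivAt (hasDerivAt_inv h0)) hf).congr_coeff (by ring) (by ring)

lemma div (hf : HasW f a b z) (hk : HasW k c d z) (h0 : k z ≠ 0) :
    HasW (fun w => f w / k w) ((a * k z - f z * c) / k z ^ 2) ((b * k z - f z * d) / k z ^ 2) z := by
  simp only [div_eq_mul_inv (f _)]
  exact (hf.mul (hk.inv h0)).congr_coeff (by field_simp; ring) (by field_simp; ring)

end HasW

lemma hasW_id (z : ℂ) : HasW (fun w => w) 1 0 z := HasW.of_hasDerivAt (hasDerivAt_id z)

lemma hasW_conj (z : ℂ) : HasW (fun w => (starRingEnd ℂ) w) 0 1 z :=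
  (hasW_id z).conj.congr_coeff (by simp) (by simp)

lemma hasW_const (c z : ℂ) : HasW (fun _ => c) 0 0 z := HasW.of_hasDerivAt (hasDerivAt_const z c)

lemma one_sub_normSq (ζ : ℂ) : ((1 - ‖ζ‖ ^ 2 : ℝ) : ℂ) = 1 - ζ * (starRingEnd ℂ) ζ := by
  rw [Complex.mul_conj, Complex.normSq_eq_norm_sq]; push_cast; rfl

lemma hasW_one_sub_normSq (ζ : ℂ) :
    HasW (fun w => ((1 - ‖w‖ ^ 2 : ℝ) : ℂ)) (-(starRingEnd ℂ) ζ) (-ζ) ζ := by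
  have h := (hasW_const 1 ζ).add ((hasW_const (-1) ζ).mul ((hasW_id ζ).mul (hasW_conj ζ)))
  have e : (fun w : ℂ => ((1 - ‖w‖ ^ 2 : ℝ) : ℂ)) =
      fun w => 1 + -1 * (w * (starRingEnd ℂ) w) := by
    funext w; rw [one_sub_normSq]; ring
  rw [e]
  exact h.congr_coeff (by ring) (by ring)

/-- `∂D = (conj ζ Ph - r Ph') / 2` and `∂̄D = 1 + ζ Ph / 2`. -/
lemma hasW_denA {h : ℂ → ℂ} {ζ : ℂ} (hP : DifferentiableAt ℂ (preSch h) ζ) :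
    HasW (denA h)
      (1 / 2 * (starRingEnd ℂ) ζ * preSch h ζ -
        1 / 2 * ((1 - ‖ζ‖ ^ 2 : ℝ) : ℂ) * deriv (preSch h) ζ)
      (1 + 1 / 2 * ζ * preSch h ζ) ζ := by
  have h1 := (hasW_conj ζ).add ((hasW_const (-(1 / 2)) ζ).mul
    ((hasW_one_sub_normSq ζ).mul (HasW.of_hasDerivAt hP.hasDerivAt)))
  have e : denA h = fun w => (starRingEnd ℂ) w +
      -(1 / 2) * (((1 - ‖w‖ ^ 2 : ℝ) : ℂ) * preSch h w) := by
    funext w; rw [denA]; ring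
  rw [e]
  exact h1.congr_coeff (by ring) (by ring)

/-- `h' + ∂Φ = h' β / D²` with `β = r² Sh / 2`, and `∂̄Φ = -h' / D²`. -/
lemma hasW_phiA {h : ℂ → ℂ} {ζ : ℂ} (hP : DifferentiableAt ℂ (preSch h) ζ)
    (hd : DifferentiableAt ℂ (deriv h) ζ) (h0 : deriv h ζ ≠ 0) (hD : denA h ζ ≠ 0) :
    HasW (phiA h)
      (deriv h ζ * ((1 / 2) * ((1 - ‖ζ‖ ^ 2 : ℝ) : ℂ) ^ 2 * schw h ζ) / denA h ζ ^ 2 - deriv h ζ)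
      (-deriv h ζ / denA h ζ ^ 2) ζ := by
  have h1 := ((hasW_one_sub_normSq ζ).mul (HasW.of_hasDerivAt hd.hasDerivAt)).div
    (hasW_denA hP) hD
  have e2 : deriv (deriv h) ζ = preSch h ζ * deriv h ζ := by
    rw [preSch]; field_simp
  have eD : denA h ζ = (starRingEnd ℂ) ζ - (1 / 2) * ((1 - ‖ζ‖ ^ 2 : ℝ) : ℂ) * preSch h ζ := rfl
  refine HasW.congr_coeff h1 ?_ ?_
  · rw [e2, schw, eq_sub_iff_add_eq, div_add' _ _ _ (pow_ne_zero 2 hD)]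
    congr 1
    rw [eD]; ring
  · congr 1
    rw [eD, one_sub_normSq]; ring

/-- The key identity for the Beltrami coefficient of the case-(A) extension. -/
theorem beltrami_identity_caseA
    (h g : ℂ → ℂ)
    (hh : DifferentiableOn ℂ h (ball 0 1)) (hg : DifferentiableOn ℂ g (ball 0 1))
    (hsp : ∀ w ∈ ball (0 : ℂ) 1, ‖dil h g w‖ < 1)
    (hh' : ∀ w ∈ ball (0 : ℂ) 1, deriv h w ≠ 0)
    (F : ℂ → ℂ) (hF : F = fun w => extA h g (1 / (starRingEnd ℂ) w))
    (z ζ : ℂ) (hz : 1 < ‖z‖) (hζ : ζ = 1 / (starRingEnd ℂ) z)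
    (hden : denA h ζ ≠ 0)
    (lam β : ℂ)
    (hlam : lam = (starRingEnd ℂ) (deriv h ζ) * (denA h ζ) ^ 2 /
        (deriv h ζ * ((starRingEnd ℂ) (denA h ζ)) ^ 2))
    (hβ : β = (1 / 2) * ((1 - ‖ζ‖ ^ 2 : ℝ) : ℂ) ^ 2 * schw h ζ) :
    wZb F z * (1 - lam * (starRingEnd ℂ) (dil h g ζ) * (starRingEnd ℂ) β -
        lam * (starRingEnd ℂ) (deriv (dil h g) ζ) * ((1 - ‖ζ‖ ^ 2 : ℝ) : ℂ) *
          (starRingEnd ℂ) (denA h ζ)) =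
      (z / (starRingEnd ℂ) z) ^ 2 * wZ F z *
        (lam * (starRingEnd ℂ) (dil h g ζ) - β) := by
  have hz0 : z ≠ 0 := by
    rintro rfl; norm_num at hz
  have hcz : (starRingEnd ℂ) z ≠ 0 := (map_ne_zero _).2 hz0
  have hmem : ζ ∈ ball (0 : ℂ) 1 := by
    rw [mem_ball_zero_iff, hζ, norm_div, norm_one, RCLike.norm_conj]
    exact (div_lt_one (by linarith)).2 hz
  have hnhds : ball (0 : ℂ) 1 ∈ nhds ζ := isOpen_ball.mem_nhds hmem
  have hdh : DifferentiableOn ℂ (deriv h) (ball 0 1) := hh.deriv isOpen_ball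
  have hP : DifferentiableAt ℂ (preSch h) ζ :=
    ((hdh.deriv isOpen_ball).differentiableAt hnhds).div (hdh.differentiableAt hnhds) (hh' ζ hmem)
  have hω : DifferentiableAt ℂ (dil h g) ζ :=
    ((hg.deriv isOpen_ball).differentiableAt hnhds).div (hdh.differentiableAt hnhds) (hh' ζ hmem)
  have h0 := hh' ζ hmem
  have hΦ := hasW_phiA hP (hdh.differentiableAt hnhds) h0 hden
  rw [← hβ] at hΦ
  have hE : HasW (extA h g) _ _ ζ :=
    (((HasW.of_hasDerivAt (hh.differentiableAt hnhds).hasDerivAt).add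
      (HasW.of_hasDerivAt (hg.differentiableAt hnhds).hasDerivAt).conj).add hΦ).add
      ((HasW.of_hasDerivAt hω.hasDerivAt).conj.mul hΦ.conj)
  have hcD : (starRingEnd ℂ) (denA h ζ) ≠ 0 := (map_ne_zero _).2 hden
  have hch : (starRingEnd ℂ) (deriv h ζ) ≠ 0 := (map_ne_zero _).2 h0
  have hg' : deriv g ζ = dil h g ζ * deriv h ζ := by rw [dil]; field_simp
  have hr : (starRingEnd ℂ) ((1 - ‖ζ‖ ^ 2 : ℝ) : ℂ) = ((1 - ‖ζ‖ ^ 2 : ℝ) : ℂ) :=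
    Complex.conj_ofReal _
  have hE' : HasW (extA h g)
      (deriv h ζ / denA h ζ ^ 2 * (β - lam * (starRingEnd ℂ) (dil h g ζ)))
      (-(deriv h ζ / denA h ζ ^ 2) *
        (1 - lam * (starRingEnd ℂ) (dil h g ζ) * (starRingEnd ℂ) β -
        lam * (starRingEnd ℂ) (deriv (dil h g) ζ) * ((1 - ‖ζ‖ ^ 2 : ℝ) : ℂ) *
          (starRingEnd ℂ) (denA h ζ))) ζ := by
    refine hE.congr_coeff ?_ ?_
    · rw [hlam]
      simp only [map_div₀, map_pow, map_neg, map_zero]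
      field_simp
      ring
    · rw [hlam, hg', phiA]
      simp only [map_sub, map_mul, map_div₀, map_pow, hr]
      generalize ((1 - ‖ζ‖ ^ 2 : ℝ) : ℂ) = r
      field_simp
      ring
  have hrefl : HasW (fun w => 1 / (starRingEnd ℂ) w) 0 (-1 / (starRingEnd ℂ) z ^ 2) z :=
    ((hasW_const 1 z).div (hasW_conj z) hcz).congr_coeff (by simp) (by simp)
  -- The reflection has no `∂`-derivative, so composing with it swaps `∂E` and `∂̄E`.
  rw [hζ] at hE'
  have hFW := HasW.comp (k := fun w => 1 / (starRingEnd ℂ) w) hE' hrefl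
  rw [← hF, ← hζ] at hFW
  rw [hFW.wZ_eq, hFW.wZb_eq]
  simp only [map_zero, map_div₀, map_neg, map_one, map_pow, Complex.conj_conj]
  field_simp
  ring
end
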